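/- Let p > 0, x† ∈ X, y = T x†, and for α > 0 let x_α = g_α(T*T)T*y. Suppose there exist C > 0 and ᾱ ∈ (0,1) such that ‖x† − x_α‖ ≤ C·(−ln α)^{−p} for all α ∈ (0,ᾱ]. Then for every q with 0 < q < p there exist ρ > 0 and w ∈ X with ‖w‖ ≤ ρ such that x† = f_q(T*T)w. -/

import Mathlib

open ContinuousLinearMap

/-- The generator function `g_α(λ) = 1/(λ + (1 − λ^{√α})²)` with `g_α(0) = 1`,
where `λ^{√α} = exp(√α · log λ)`. -/
noncomputable def genFun (α : ℝ) : ℝ → ℝ := fun t =>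
  if t = 0 then 1 else 1 / (t + (1 - Real.exp (Real.sqrt α * Real.log t)) ^ 2)

/-- `f_q(λ) = (−log λ)^{−q}` (with `f_q(0) = 0`). -/
noncomputable def fpFun (q : ℝ) : ℝ → ℝ := fun t => (-Real.log t) ^ (-q)

/-!
With `A = T*T` and the residual function `r_α(t) = 1 - t g_α(t)` one has `x† - x_α = r_α(A) x†`.
For `α ≤ e⁻¹`, `r_α` is bounded below by `1/5` on `[0, α]`, since `1 - t^√α ≥ 1 - α^√α ≥ √α / 2`
there. So the regularization error `‖r_α(A) x†‖` controls the spectral mass of `x†` below `α`.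

Along `α_n = exp(-2^n)` put `b_n = f_q(α_n) = 2^(-qn)` and `w_n = max(f_q, b_n)⁻¹(A) x†`. The
functions `max(f_q, b_n)⁻¹` and `max(f_q, b_(n+1))⁻¹` differ only on `[0, α_n]`, and by at most
`1 / b_(n+1)`, so `‖w_n - w_(n+1)‖ ≤ 5 ‖r_(α_n)(A) x†‖ / b_(n+1) = O(2^((q-p)n))` is summable.
In the same way `‖x† - f_q(A) w_n‖ ≤ 5 ‖r_(α_n)(A) x†‖ → 0`, hence `w = lim w_n` solves
`f_q(A) w = x†`.
-/

section SourceFunction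

open Set Filter Topology

variable {q : ℝ}

lemma fpFun_exp_neg (q a : ℝ) : fpFun q (Real.exp (-a)) = a ^ (-q) := by
  simp only [fpFun, Real.log_exp, neg_neg]

lemma fpFun_zero (hq : q ≠ 0) : fpFun q 0 = 0 := by
  simp only [fpFun, Real.log_zero, neg_zero, Real.zero_rpow (neg_ne_zero.mpr hq)]

lemma fpFun_nonneg (q : ℝ) {t : ℝ} (ht : t ∈ Icc (0 : ℝ) 1) : 0 ≤ fpFun q t :=
  Real.rpow_nonneg (neg_nonneg.mpr (Real.log_nonpos ht.1 ht.2)) _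

lemma monotoneOn_fpFun (hq : 0 < q) : MonotoneOn (fpFun q) (Ico 0 1) := by
  intro s hs t ht hst
  rcases hs.1.eq_or_lt with rfl | hs0
  · rw [fpFun_zero hq.ne']
    exact fpFun_nonneg q (Ico_subset_Icc_self ht)
  · have hlog : 0 < -Real.log t := neg_pos.mpr (Real.log_neg (hs0.trans_le hst) ht.2)
    exact Real.rpow_le_rpow_of_nonpos hlog (neg_le_neg (Real.log_le_log hs0 hst))
      (neg_nonpos.mpr hq.le)

lemma continuousOn_fpFun (hq : 0 < q) : ContinuousOn (fpFun q) (Ico 0 1) := by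
  intro t ht
  rcases ht.1.eq_or_lt with rfl | ht0
  · have hlim : Tendsto (fpFun q) (𝓝[>] 0) (𝓝 0) :=
      (tendsto_rpow_neg_atTop hq).comp
        (tendsto_neg_atBot_atTop.comp Real.tendsto_log_nhdsGT_zero)
    have hIoi : ContinuousWithinAt (fpFun q) (Ioi 0) 0 := by
      rwa [ContinuousWithinAt, fpFun_zero hq.ne']
    exact (continuousWithinAt_Ioi_iff_Ici.mp hIoi).mono Ico_subset_Ici_self
  · have hlog : -Real.log t ≠ 0 := neg_ne_zero.mpr (Real.log_neg ht0 ht.2).ne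
    exact ((Real.continuousAt_log ht0.ne').neg.rpow_const (Or.inl hlog)).continuousWithinAt

end SourceFunction

section Residual

open Set

/-- The residual function `r_α(t) = 1 - t g_α(t)` of the regularization scheme with generator
`g_α`; the regularization error is `x† - x_α = r_α(T*T) x†`. -/
noncomputable def residualFun (α : ℝ) : ℝ → ℝ := fun t => 1 - t * genFun α t

variable {α t : ℝ}

lemma genFun_eq_rpow (hα : 0 < α) (ht : 0 ≤ t) :
    genFun α t = 1 / (t + (1 - t ^ √α) ^ 2) := by
  rcases ht.eq_or_lt with rfl | ht0
  · simp [genFun, Real.zero_rpow (Real.sqrt_pos.mpr hα).ne']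
  · rw [genFun, if_neg ht0.ne', Real.rpow_def_of_pos ht0, mul_comm]

lemma genFun_denom_pos (hα : 0 < α) (ht : 0 ≤ t) : 0 < t + (1 - t ^ √α) ^ 2 := by
  rcases ht.eq_or_lt with rfl | ht0
  · simp [Real.zero_rpow (Real.sqrt_pos.mpr hα).ne']
  · positivity

lemma continuousOn_genFun (hα : 0 < α) : ContinuousOn (genFun α) (Ici 0) := by
  have hpow : Continuous fun t : ℝ => t ^ √α := Real.continuous_rpow_const (Real.sqrt_nonneg α)
  refine ContinuousOn.congr (f := fun t => 1 / (t + (1 - t ^ √α) ^ 2)) ?_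
    fun t ht => genFun_eq_rpow hα ht
  exact ContinuousOn.div (by fun_prop) (by fun_prop) fun t ht => (genFun_denom_pos hα ht).ne'

lemma continuousOn_residualFun (hα : 0 < α) : ContinuousOn (residualFun α) (Ici 0) :=
  continuousOn_const.sub (continuousOn_id.mul (continuousOn_genFun hα))

lemma residualFun_eq_div (hα : 0 < α) (ht : 0 ≤ t) :
    residualFun α t = (1 - t ^ √α) ^ 2 / (t + (1 - t ^ √α) ^ 2) := by
  have hden := (genFun_denom_pos hα ht).ne'
  rw [residualFun, genFun_eq_rpow hα ht]
  field_simp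
  ring

lemma exp_neg_le_one_sub_half {s : ℝ} (hs : s ∈ Icc (0 : ℝ) 1) :
    Real.exp (-s) ≤ 1 - s / 2 := by
  have hs0 := hs.1
  have hs1 := hs.2
  calc Real.exp (-s) = (Real.exp s)⁻¹ := Real.exp_neg s
    _ ≤ (s + 1)⁻¹ := inv_anti₀ (by linarith) (Real.add_one_le_exp s)
    _ ≤ 1 - s / 2 := by
      rw [inv_le_iff_one_le_mul₀ (by linarith)]
      nlinarith

lemma sqrt_div_two_le_one_sub_rpow_sqrt (hα : 0 < α) (hα1 : α ≤ Real.exp (-1))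
    (ht : t ∈ Icc 0 α) : √α / 2 ≤ 1 - t ^ √α := by
  have hsqrt1 : √α ≤ 1 :=
    Real.sqrt_le_one.mpr (hα1.trans (Real.exp_le_one_iff.mpr (by norm_num)))
  have hlog : Real.log α ≤ -1 := (Real.log_le_iff_le_exp hα).mpr hα1
  have hpow : t ^ √α ≤ 1 - √α / 2 :=
    calc t ^ √α ≤ α ^ √α := Real.rpow_le_rpow ht.1 ht.2 (Real.sqrt_nonneg α)
      _ = Real.exp (Real.log α * √α) := Real.rpow_def_of_pos hα _
      _ ≤ Real.exp (-√α) := Real.exp_le_exp.mpr (by nlinarith [Real.sqrt_nonneg α])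
      _ ≤ 1 - √α / 2 := exp_neg_le_one_sub_half ⟨Real.sqrt_nonneg α, hsqrt1⟩
  linarith

lemma one_fifth_le_residualFun (hα : 0 < α) (hα1 : α ≤ Real.exp (-1)) (ht : t ∈ Icc 0 α) :
    1 / 5 ≤ residualFun α t := by
  have hquarter : t / 4 ≤ (1 - t ^ √α) ^ 2 :=
    calc t / 4 ≤ α / 4 := by linarith [ht.2]
      _ = (√α / 2) ^ 2 := by rw [div_pow, Real.sq_sqrt hα.le]; norm_num
      _ ≤ (1 - t ^ √α) ^ 2 :=
        pow_le_pow_left₀ (by positivity) (sqrt_div_two_le_one_sub_rpow_sqrt hα hα1 ht) 2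
  rw [residualFun_eq_div hα ht.1, le_div_iff₀ (genFun_denom_pos hα ht.1)]
  linarith

end Residual

section TruncatedInverse

/-- The reciprocal `y⁻¹` truncated at the level `b`, i.e. `max(y, b)⁻¹`. For `b > 0` it is a
continuous function of `y`, bounded by `b⁻¹`, and it replaces `y⁻¹` near `y = 0`. -/
noncomputable def truncInv (b y : ℝ) : ℝ := (max y b)⁻¹

variable {b c y R : ℝ}

lemma continuous_truncInv (hb : 0 < b) : Continuous (truncInv b) :=
  (continuous_id.max continuous_const).inv₀ fun _ => (lt_max_of_lt_right hb).ne'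

lemma truncInv_of_le (hby : b ≤ y) : truncInv b y = y⁻¹ := by rw [truncInv, max_eq_left hby]

lemma truncInv_nonneg (hb : 0 < b) (y : ℝ) : 0 ≤ truncInv b y :=
  inv_nonneg.mpr (hb.le.trans (le_max_right y b))

lemma truncInv_le_inv (hb : 0 < b) (y : ℝ) : truncInv b y ≤ b⁻¹ :=
  inv_anti₀ hb (le_max_right y b)

lemma mul_truncInv_le_one (hb : 0 < b) (y : ℝ) : y * truncInv b y ≤ 1 :=
  div_eq_mul_inv y (max y b) ▸
    div_le_one_of_le₀ (le_max_left y b) (hb.le.trans (le_max_right y b))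

lemma abs_truncInv_sub_truncInv_le (hb : 0 < b) (hc : 0 < c) (hcb : c ≤ b) (hR : 0 ≤ R)
    (hyR : y < b → 1 ≤ R) : |truncInv b y - truncInv c y| ≤ c⁻¹ * R := by
  have hc' : 0 ≤ c⁻¹ := inv_nonneg.mpr hc.le
  rcases lt_or_ge y b with hlt | hge
  · have hdiff : |truncInv b y - truncInv c y| ≤ c⁻¹ :=
      abs_sub_le_of_nonneg_of_le (truncInv_nonneg hb y)
        ((truncInv_le_inv hb y).trans (inv_anti₀ hc hcb))
        (truncInv_nonneg hc y) (truncInv_le_inv hc y)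
    exact hdiff.trans (le_mul_of_one_le_right hc' (hyR hlt))
  · rw [truncInv_of_le hge, truncInv_of_le (hcb.trans hge), sub_self, abs_zero]
    exact mul_nonneg hc' hR

lemma abs_one_sub_mul_truncInv_le (hb : 0 < b) (hy : 0 ≤ y) (hR : 0 ≤ R)
    (hyR : y < b → 1 ≤ R) : |1 - y * truncInv b y| ≤ R := by
  rcases lt_or_ge y b with hlt | hge
  · have hprod : 0 ≤ y * truncInv b y := mul_nonneg hy (truncInv_nonneg hb y)
    rw [abs_of_nonneg (sub_nonneg.mpr (mul_truncInv_le_one hb y))]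
    linarith [hyR hlt]
  · rwa [truncInv_of_le hge, mul_inv_cancel₀ (hb.trans_le hge).ne', sub_self, abs_zero]

end TruncatedInverse

section FunctionalCalculus

open Set Filter Topology

variable {X : Type*} [NormedAddCommGroup X] [InnerProductSpace ℂ X] [CompleteSpace X]
  {A : X →L[ℂ] X} {f g r : ℝ → ℝ} {b c κ M : ℝ}

lemma norm_sq_cfc_apply (hA : IsSelfAdjoint A) (hf : ContinuousOn f (spectrum ℝ A)) (x : X) :
    ‖cfc f A x‖ ^ 2 = RCLike.re (inner ℂ (cfc (fun t => f t ^ 2) A x) x) := by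
  have hadj : adjoint (cfc f A) = cfc f A := (cfc_predicate f A : IsSelfAdjoint _).adjoint_eq
  rw [apply_norm_sq_eq_inner_adjoint_left, hadj, cfc_pow f 2 A hf hA, pow_two]
  rfl

lemma norm_cfc_apply_le_of_abs_le (hA : IsSelfAdjoint A) (hf : ContinuousOn f (spectrum ℝ A))
    (hg : ContinuousOn g (spectrum ℝ A)) (hfg : ∀ t ∈ spectrum ℝ A, |f t| ≤ |g t|) (x : X) :
    ‖cfc f A x‖ ≤ ‖cfc g A x‖ := by
  have hle : cfc (fun t => f t ^ 2) A ≤ cfc (fun t => g t ^ 2) A :=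
    cfc_mono (fun t ht => sq_le_sq.mpr (hfg t ht)) (hf.pow 2) (hg.pow 2)
  have hre := ((ContinuousLinearMap.le_def _ _).mp hle).re_inner_nonneg_left x
  rw [_root_.sub_apply, inner_sub_left, map_sub, ← norm_sq_cfc_apply hA hf,
    ← norm_sq_cfc_apply hA hg, sub_nonneg] at hre
  exact le_of_sq_le_sq hre (norm_nonneg _)

lemma norm_cfc_apply_le_mul_of_abs_le (hA : IsSelfAdjoint A)
    (hf : ContinuousOn f (spectrum ℝ A)) (hg : ContinuousOn g (spectrum ℝ A)) (hM : 0 ≤ M)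
    (hfg : ∀ t ∈ spectrum ℝ A, |f t| ≤ M * |g t|) (x : X) :
    ‖cfc f A x‖ ≤ M * ‖cfc g A x‖ :=
  calc ‖cfc f A x‖ ≤ ‖cfc (fun t => M * g t) A x‖ :=
        norm_cfc_apply_le_of_abs_le hA hf (continuousOn_const.mul hg)
          (fun t ht => by simpa only [Pi.mul_apply, abs_mul, abs_of_nonneg hM] using hfg t ht) x
    _ = M * ‖cfc g A x‖ := by
        rw [cfc_const_mul M g A hg, _root_.smul_apply, norm_smul, Real.norm_of_nonneg hM]

lemma cfc_one_sub_mul_apply (hA : IsSelfAdjoint A) (hf : ContinuousOn f (spectrum ℝ A))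
    (hg : ContinuousOn g (spectrum ℝ A)) (x : X) :
    cfc (fun t => 1 - f t * g t) A x = x - cfc f A (cfc g A x) := by
  rw [cfc_sub (fun _ => 1) (fun t => f t * g t) A continuousOn_const (hf.mul hg),
    cfc_const_one ℝ A, cfc_mul f g A hf hg]
  rfl

lemma norm_cfc_truncInv_sub_le (hA : IsSelfAdjoint A) (hf : ContinuousOn f (spectrum ℝ A))
    (hr : ContinuousOn r (spectrum ℝ A)) (hb : 0 < b) (hc : 0 < c) (hcb : c ≤ b) (hκ : 0 ≤ κ)
    (hfr : ∀ t ∈ spectrum ℝ A, f t < b → 1 ≤ κ * |r t|) (x : X) :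
    ‖cfc (fun t => truncInv b (f t)) A x - cfc (fun t => truncInv c (f t)) A x‖ ≤
      c⁻¹ * κ * ‖cfc r A x‖ := by
  have hcont {d : ℝ} (hd : 0 < d) :
      ContinuousOn (fun t => truncInv d (f t)) (spectrum ℝ A) :=
    (continuous_truncInv hd).comp_continuousOn hf
  rw [← _root_.sub_apply, ← cfc_sub _ _ A (hcont hb) (hcont hc)]
  refine norm_cfc_apply_le_mul_of_abs_le hA ((hcont hb).sub (hcont hc)) hr (by positivity)
    (fun t ht => ?_) x
  rw [mul_assoc]
  exact abs_truncInv_sub_truncInv_le hb hc hcb (by positivity) (hfr t ht)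

lemma norm_sub_cfc_cfc_truncInv_le (hA : IsSelfAdjoint A) (hf : ContinuousOn f (spectrum ℝ A))
    (hf0 : ∀ t ∈ spectrum ℝ A, 0 ≤ f t) (hr : ContinuousOn r (spectrum ℝ A)) (hb : 0 < b)
    (hκ : 0 ≤ κ) (hfr : ∀ t ∈ spectrum ℝ A, f t < b → 1 ≤ κ * |r t|) (x : X) :
    ‖x - cfc f A (cfc (fun t => truncInv b (f t)) A x)‖ ≤ κ * ‖cfc r A x‖ := by
  have hcont : ContinuousOn (fun t => truncInv b (f t)) (spectrum ℝ A) :=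
    (continuous_truncInv hb).comp_continuousOn hf
  rw [← cfc_one_sub_mul_apply hA hf hcont]
  exact norm_cfc_apply_le_mul_of_abs_le hA (continuousOn_const.sub (hf.mul hcont)) hr hκ
    (fun t ht => abs_one_sub_mul_truncInv_le hb (hf0 t ht) (by positivity) (hfr t ht)) x

theorem exists_eq_cfc_apply_of_summable {r : ℕ → ℝ → ℝ} {b : ℕ → ℝ} {x : X}
    (hA : IsSelfAdjoint A) (hf : ContinuousOn f (spectrum ℝ A))
    (hf0 : ∀ t ∈ spectrum ℝ A, 0 ≤ f t) (hr : ∀ n, ContinuousOn (r n) (spectrum ℝ A))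
    (hb : ∀ n, 0 < b n) (hb_anti : Antitone b) (hκ : 0 ≤ κ)
    (hfr : ∀ n, ∀ t ∈ spectrum ℝ A, f t < b n → 1 ≤ κ * |r n t|)
    (hsum : Summable fun n => (b (n + 1))⁻¹ * ‖cfc (r n) A x‖) :
    ∃ w, x = cfc f A w := by
  set u : ℕ → X := fun n => cfc (fun t => truncInv (b n) (f t)) A x
  have hu_cauchy : CauchySeq u := by
    refine cauchySeq_of_dist_le_of_summable _ (fun n => ?_) (hsum.mul_left κ)
    calc dist (u n) (u (n + 1)) ≤ (b (n + 1))⁻¹ * κ * ‖cfc (r n) A x‖ := by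
          rw [dist_eq_norm]
          exact norm_cfc_truncInv_sub_le hA hf (hr n) (hb n) (hb (n + 1)) (hb_anti n.le_succ) hκ
            (hfr n) x
      _ = κ * ((b (n + 1))⁻¹ * ‖cfc (r n) A x‖) := by ring
  obtain ⟨w, hw⟩ := cauchySeq_tendsto_of_complete hu_cauchy
  have hr_lim : Tendsto (fun n => ‖cfc (r n) A x‖) atTop (𝓝 0) := by
    have hle (n : ℕ) : ‖cfc (r n) A x‖ ≤ b 0 * ((b (n + 1))⁻¹ * ‖cfc (r n) A x‖) := by
      rw [← mul_assoc, ← div_eq_mul_inv]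
      exact le_mul_of_one_le_left (norm_nonneg _)
        ((one_le_div (hb (n + 1))).mpr (hb_anti (Nat.zero_le _)))
    exact squeeze_zero (fun n => norm_nonneg _) hle
      (by simpa only [mul_zero] using hsum.tendsto_atTop_zero.const_mul (b 0))
  have hfu_lim : Tendsto (fun n => cfc f A (u n)) atTop (𝓝 x) := by
    refine tendsto_iff_norm_sub_tendsto_zero.mpr (squeeze_zero (fun n => norm_nonneg _)
      (fun n => ?_) (by simpa only [mul_zero] using hr_lim.const_mul κ))
    rw [norm_sub_rev]
    exact norm_sub_cfc_cfc_truncInv_le hA hf hf0 (hr n) (hb n) hκ (hfr n) x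
  exact ⟨w, tendsto_nhds_unique hfu_lim (((cfc f A).continuous.tendsto w).comp hw)⟩

lemma spectrum_subset_Ico_of_nonneg_of_norm_lt_one (hA : 0 ≤ A) (hA1 : ‖A‖ < 1) :
    spectrum ℝ A ⊆ Ico 0 1 := by
  intro t ht
  refine ⟨spectrum_nonneg_of_nonneg hA ht, ?_⟩
  calc t ≤ ‖t‖ := le_abs_self t
    _ ≤ ‖A‖ * ‖(1 : X →L[ℂ] X)‖ := spectrum.norm_le_norm_mul_of_mem ht
    _ ≤ ‖A‖ := mul_le_of_le_one_right (norm_nonneg A) norm_id_le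
    _ < 1 := hA1

lemma cfc_residualFun_apply {α : ℝ} (hA : 0 ≤ A) (hα : 0 < α) (x : X) :
    cfc (residualFun α) A x = x - cfc (genFun α) A (A x) := by
  have hgen : ContinuousOn (genFun α) (spectrum ℝ A) :=
    (continuousOn_genFun hα).mono fun t ht => spectrum_nonneg_of_nonneg hA ht
  have hsa : IsSelfAdjoint A := .of_nonneg hA
  have hfactor : residualFun α = fun t => 1 - genFun α t * id t := by
    funext t
    rw [residualFun, id, mul_comm]
  rw [hfactor, cfc_one_sub_mul_apply hsa hgen continuousOn_id, cfc_id ℝ A hsa]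

end FunctionalCalculus

section Converse

open Set Filter Topology Asymptotics

lemma tendsto_exp_neg_two_pow :
    Tendsto (fun n : ℕ => Real.exp (-2 ^ n)) atTop (𝓝[>] 0) :=
  Real.tendsto_exp_atBot_nhdsGT.comp
    (tendsto_neg_atTop_atBot.comp (tendsto_pow_atTop_atTop_of_one_lt one_lt_two))

lemma summable_inv_fpFun_exp_mul {p q : ℝ} (hqp : q < p) {e : ℝ → ℝ}
    (he : e =O[𝓝[>] 0] fun α => (-Real.log α) ^ (-p)) :
    Summable fun n : ℕ => (fpFun q (Real.exp (-2 ^ (n + 1))))⁻¹ * e (Real.exp (-2 ^ n)) := by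
  have hratio : (2 : ℝ) ^ (q - p) < 1 := Real.rpow_lt_one_of_one_lt_of_neg one_lt_two (by linarith)
  have hscale (n : ℕ) (s : ℝ) : ((2 : ℝ) ^ n) ^ s = (2 ^ s) ^ n := by
    rw [← Real.rpow_natCast_mul zero_le_two, mul_comm, Real.rpow_mul_natCast zero_le_two]
  have he_seq : (fun n : ℕ => e (Real.exp (-2 ^ n))) =O[atTop] fun n => ((2 : ℝ) ^ (-p)) ^ n := by
    simpa only [Function.comp_def, Real.log_exp, neg_neg, hscale] using
      he.comp_tendsto tendsto_exp_neg_two_pow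
  refine summable_of_isBigO_nat ((summable_geometric_of_lt_one (by positivity) hratio).mul_left
    (2 ^ q)) (((isBigO_refl _ atTop).mul he_seq).congr_right fun n => ?_)
  rw [fpFun_exp_neg, Real.rpow_neg (by positivity), inv_inv, hscale, pow_succ', mul_assoc,
    ← mul_pow, ← Real.rpow_add two_pos, sub_eq_add_neg]

theorem stmt12_general {X : Type*} [NormedAddCommGroup X] [InnerProductSpace ℂ X]
    [CompleteSpace X] {A : X →L[ℂ] X} (hA : 0 ≤ A) (hA1 : ‖A‖ < 1) {p q : ℝ} (hq : 0 < q)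
    (hqp : q < p) {x : X}
    (hrate : (fun α => x - cfc (genFun α) A (A x)) =O[𝓝[>] 0] fun α => (-Real.log α) ^ (-p)) :
    ∃ w, x = cfc (fpFun q) A w := by
  have hspec : spectrum ℝ A ⊆ Ico 0 1 := spectrum_subset_Ico_of_nonneg_of_norm_lt_one hA hA1
  have hmono := monotoneOn_fpFun hq
  set α : ℕ → ℝ := fun n => Real.exp (-2 ^ n)
  have hα_pos (n : ℕ) : 0 < α n := Real.exp_pos _
  have hα_le (n : ℕ) : α n ≤ Real.exp (-1) :=
    Real.exp_le_exp.mpr (neg_le_neg (one_le_pow₀ one_le_two))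
  have hα_mem (n : ℕ) : α n ∈ Ico (0 : ℝ) 1 :=
    ⟨(hα_pos n).le, (hα_le n).trans_lt (Real.exp_lt_one_iff.mpr (by norm_num))⟩
  have hα_anti : Antitone α := fun m n hmn =>
    Real.exp_le_exp.mpr (neg_le_neg (pow_le_pow_right₀ one_le_two hmn))
  refine exists_eq_cfc_apply_of_summable (r := fun n => residualFun (α n))
    (b := fun n => fpFun q (α n)) (κ := 5) (.of_nonneg hA) ((continuousOn_fpFun hq).mono hspec)
    (fun t ht => fpFun_nonneg q (Ico_subset_Icc_self (hspec ht)))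
    (fun n => (continuousOn_residualFun (hα_pos n)).mono fun t ht => (hspec ht).1)
    (fun n => ?_) (fun m n hmn => hmono (hα_mem n) (hα_mem m) (hα_anti hmn)) (by norm_num)
    (fun n t ht hlt => ?_) ?_
  · rw [fpFun_exp_neg]
    positivity
  · have htα : t ≤ α n := (hmono.reflect_lt (hspec ht) (hα_mem n) hlt).le
    linarith [one_fifth_le_residualFun (hα_pos n) (hα_le n) ⟨(hspec ht).1, htα⟩,
      le_abs_self (residualFun (α n) t)]
  · simpa only [cfc_residualFun_apply hA (hα_pos _)] using
      summable_inv_fpFun_exp_mul hqp hrate.norm_left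

end Converse

/-- (Converse result.) Let `T` be a bounded injective operator between complex Hilbert
spaces with `‖T*T‖ ≤ e⁻¹`, let `p > 0`, `x† ∈ X`, `y = T x†`, and for `α > 0` let
`x_α = g_α(T*T)T*y`. Suppose there exist `C > 0` and `ᾱ ∈ (0,1)` such that
`‖x† − x_α‖ ≤ C·(−log α)^{−p}` for all `α ∈ (0,ᾱ]`. Then for every `q` with
`0 < q < p` there exist `ρ > 0` and `w` with `‖w‖ ≤ ρ` such that `x† = f_q(T*T)w`. -/
theorem stmt12 {X Y : Type*} [NormedAddCommGroup X] [InnerProductSpace ℂ X]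
    [CompleteSpace X] [NormedAddCommGroup Y] [InnerProductSpace ℂ Y] [CompleteSpace Y]
    (T : X →L[ℂ] Y) (hTinj : Function.Injective T)
    (hTnorm : ‖(adjoint T) ∘L T‖ ≤ Real.exp (-1))
    (p : ℝ) (hp : 0 < p) (xdag : X)
    (C : ℝ) (hC : 0 < C) (αbar : ℝ) (hαbar : αbar ∈ Set.Ioo (0 : ℝ) 1)
    (hrate : ∀ α ∈ Set.Ioc (0 : ℝ) αbar,
      ‖xdag - cfc (genFun α) ((adjoint T) ∘L T) ((adjoint T) (T xdag))‖ ≤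
        C * (-Real.log α) ^ (-p)) :
    ∀ q : ℝ, 0 < q → q < p →
      ∃ ρ > (0 : ℝ), ∃ w : X, ‖w‖ ≤ ρ ∧ xdag = cfc (fpFun q) ((adjoint T) ∘L T) w := by
  intro q hq hqp
  obtain ⟨w, hw⟩ := stmt12_general ((nonneg_iff_isPositive _).mpr T.isPositive_adjoint_comp_self)
    (hTnorm.trans_lt (Real.exp_lt_one_iff.mpr neg_one_lt_zero)) hq hqp
    (.of_bound C <| Filter.mem_of_superset (Ioc_mem_nhdsGT hαbar.1) fun α hα =>
      (hrate α hα).trans (mul_le_mul_of_nonneg_left (le_abs_self _) hC.le))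
  exact ⟨‖w‖ + 1, by positivity, w, by simp, hw⟩
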